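/- Let s > 1/2 and let Ω ⊂ ℝ² be a bounded open set, D = Ω × (-π, π). There exists a constant C = C(s) > 0 such that for all smooth divergence-free vector fields u, v, w : D → ℝ³ that are 2π-periodic with mean zero in x₃ and vanish on the lateral boundary ∂Ω × (-π, π), one has |∫_D (u·∇)v · w dx| ≤ C ‖u‖_{L²(D)}^{1/2} ‖∇u‖_{L²(D)}^{1/2} ‖∇v‖_{L²(D)}^{1 - 1/(2s)} ‖∂₃^s ∇v‖_{L²(D)}^{1/(2s)} ‖w‖_{L²(D)}^{1/2} ‖∇w‖_{L²(D)}^{1/2}, where (u·∇)v denotes the vector field with components Σ_j u_j ∂_j v_i. -/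

import Mathlib

open MeasureTheory Set
open scoped Real

/-- The three coordinate directions of the cylinder `(ℝ × ℝ) × ℝ`
(two horizontal, one vertical). -/
def dir3 : Fin 3 → (ℝ × ℝ) × ℝ := ![((1, 0), 0), ((0, 1), 0), ((0, 0), 1)]

/-!
On each vertical line, `∇v` has mean zero and is periodic, so its supremum is at most the sum of
the absolute values of its Fourier coefficients. Carlson's inequality (Cauchy–Schwarz with the
weight `1 + (|k| / M) ^ (2 * s)`, then optimization in `M`) bounds this sum by
`A ^ (1 / 2 * (1 - 1 / (2 * s))) * B ^ (1 / (4 * s))`, where `A` and `B` are the integrals of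
`|∇v|²` and `|∂₃ˢ∇v|²` over the line. After taking this supremum out of the vertical integral of
`(u · ∇)v · w`, Cauchy–Schwarz in `x₃` leaves the vertical integrals of `|u|²` and `|w|²` to the
power `1 / 2`. These two functions on `ℝ²` are in `L²`: the embedding `W^{1,1}(ℝ²) ⊂ L²(ℝ²)` bounds
their `L²` norms by the `L¹` norms of `∇|u|²` and `∇|w|²`, hence by constant multiples of
`‖u‖ ‖∇u‖` and `‖w‖ ‖∇w‖`. Hölder's inequality in the horizontal variables concludes, since the
exponents of `A` and `B` add up to `1 / 2`.
-/

open scoped NNReal ENNReal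

section Carlson

variable {ι : Type*}

theorem summable_and_tsum_mul_le_sqrt_mul_sqrt {f g : ι → ℝ} (hf : ∀ i, 0 ≤ f i)
    (hg : ∀ i, 0 ≤ g i) (hf2 : Summable fun i ↦ f i ^ 2) (hg2 : Summable fun i ↦ g i ^ 2) :
    (Summable fun i ↦ f i * g i) ∧
      ∑' i, f i * g i ≤ √(∑' i, f i ^ 2) * √(∑' i, g i ^ 2) := by
  simpa only [Real.rpow_two, ← Real.sqrt_eq_rpow] using
    Real.summable_and_inner_le_Lp_mul_Lq_tsum_of_nonneg Real.HolderConjugate.two_two hf hg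
      (by simpa only [Real.rpow_two] using hf2) (by simpa only [Real.rpow_two] using hg2)

theorem summable_and_tsum_le_sqrt_mul_sqrt_of_weight {c d : ι → ℝ} (hc : ∀ i, 0 ≤ c i)
    (hd : ∀ i, 0 < d i) (hcd : Summable fun i ↦ c i ^ 2 * d i)
    (hd_inv : Summable fun i ↦ (d i)⁻¹) :
    Summable c ∧ ∑' i, c i ≤ √(∑' i, c i ^ 2 * d i) * √(∑' i, (d i)⁻¹) := by
  have hf : ∀ i, (c i * √(d i)) ^ 2 = c i ^ 2 * d i := fun i ↦ by
    rw [mul_pow, Real.sq_sqrt (hd i).le]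
  have hg : ∀ i, (√(d i))⁻¹ ^ 2 = (d i)⁻¹ := fun i ↦ by
    rw [inv_pow, Real.sq_sqrt (hd i).le]
  have hfg : ∀ i, c i * √(d i) * (√(d i))⁻¹ = c i := fun i ↦
    mul_inv_cancel_right₀ (Real.sqrt_pos.2 (hd i)).ne' _
  simpa only [hf, hg, hfg] using summable_and_tsum_mul_le_sqrt_mul_sqrt
    (fun i ↦ mul_nonneg (hc i) (Real.sqrt_nonneg (d i)))
    (fun i ↦ inv_nonneg.2 (Real.sqrt_nonneg (d i)))
    (by simpa only [hf] using hcd) (by simpa only [hg] using hd_inv)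

theorem hasSum_comp_nat_div {g : ℕ → ℝ} {a : ℝ} (hg : HasSum g a) (N : ℕ) [NeZero N] :
    HasSum (fun n ↦ g (n / N)) (a * N) := by
  have hfin : HasSum (fun _ : Fin N ↦ (1 : ℝ)) N := by
    simpa using hasSum_fintype fun _ : Fin N ↦ (1 : ℝ)
  have hprod := hg.mul hfin (summable_mul_of_summable_norm hg.summable.norm hfin.summable.norm)
  simpa [Function.comp_def] using (Nat.divModEquiv N).hasSum_iff.2 hprod

theorem summable_and_tsum_int_natAbs_le {f : ℕ → ℝ} (hf0 : ∀ n, 0 ≤ f n) (hf : Summable f) :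
    (Summable fun k : ℤ ↦ f k.natAbs) ∧ ∑' k : ℤ, f k.natAbs ≤ 2 * ∑' n, f n := by
  have hneg : HasSum (fun n : ℕ ↦ f (-((n : ℤ) + 1)).natAbs) (∑' n, f (n + 1)) := by
    have hcast : ∀ n : ℕ, (-((n : ℤ) + 1)).natAbs = n + 1 := fun n ↦ by lia
    simpa only [hcast] using ((summable_nat_add_iff 1).2 hf).hasSum
  have hint := HasSum.of_nat_of_neg_add_one (f := fun k : ℤ ↦ f k.natAbs) hf.hasSum hneg
  refine ⟨hint.summable, ?_⟩
  rw [hint.tsum_eq]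
  linarith [hf.tsum_eq_zero_add, hf0 0]

theorem summable_inv_one_add_rpow {r : ℝ} (hr : 1 < r) :
    Summable fun n : ℕ ↦ (1 + (n : ℝ) ^ r)⁻¹ := by
  rw [← summable_nat_add_iff 1]
  refine ((summable_nat_add_iff 1).2 (Real.summable_nat_rpow_inv.2 hr)).of_nonneg_of_le
    (fun n ↦ by positivity) fun n ↦ ?_
  gcongr
  linarith

theorem exists_tsum_int_inv_one_add_div_rpow_le {r : ℝ} (hr : 1 < r) :
    ∃ K : ℝ, 0 < K ∧ ∀ M : ℝ, 1 ≤ M →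
      (Summable fun k : ℤ ↦ (1 + (|(k : ℝ)| / M) ^ r)⁻¹) ∧
        ∑' k : ℤ, (1 + (|(k : ℝ)| / M) ^ r)⁻¹ ≤ K * M := by
  set S := ∑' n : ℕ, (1 + (n : ℝ) ^ r)⁻¹
  have hS : 0 < S :=
    (summable_inv_one_add_rpow hr).tsum_pos (fun n ↦ by positivity) 0 (by positivity)
  refine ⟨4 * S, by positivity, fun M hM ↦ ?_⟩
  set N := ⌈M⌉₊
  have hM0 : 0 < M := by linarith
  have hMN : M ≤ N := Nat.le_ceil M
  have hNM : (N : ℝ) ≤ 2 * M := by linarith [Nat.ceil_lt_add_one hM0.le]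
  have : NeZero N := ⟨(Nat.ceil_pos.2 hM0).ne'⟩
  -- rounding `n / M` down to `n / N` repeats each term of the unscaled series `N` times
  have hblock := hasSum_comp_nat_div (summable_inv_one_add_rpow hr).hasSum N
  have hle : ∀ n : ℕ, (1 + ((n : ℝ) / M) ^ r)⁻¹ ≤ (1 + ((n / N : ℕ) : ℝ) ^ r)⁻¹ := fun n ↦ by
    gcongr
    exact Nat.cast_div_le.trans (by gcongr)
  have hsum := hblock.summable.of_nonneg_of_le (fun n ↦ by positivity) hle
  have hnat : ∑' n : ℕ, (1 + ((n : ℝ) / M) ^ r)⁻¹ ≤ S * N :=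
    (hsum.tsum_le_tsum hle hblock.summable).trans_eq hblock.tsum_eq
  obtain ⟨hsum_int, hint⟩ := summable_and_tsum_int_natAbs_le (fun n ↦ by positivity) hsum
  simp only [Nat.cast_natAbs, Int.cast_abs] at hsum_int hint
  refine ⟨hsum_int, hint.trans ?_⟩
  nlinarith

theorem exists_tsum_le_sqrt_mul_add_div_rpow {s : ℝ} (hs : 1 / 2 < s) :
    ∃ K : ℝ, 0 < K ∧ ∀ c : ℤ → ℝ, (∀ k, 0 ≤ c k) → (Summable fun k ↦ c k ^ 2) →
      (Summable fun k : ℤ ↦ (|(k : ℝ)| ^ s * c k) ^ 2) →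
      Summable c ∧ ∀ M : ℝ, 1 ≤ M → ∑' k, c k ≤
        √(K * M * (∑' k, c k ^ 2 + (∑' k : ℤ, (|(k : ℝ)| ^ s * c k) ^ 2) / M ^ (2 * s))) := by
  obtain ⟨K, hK, h⟩ := exists_tsum_int_inv_one_add_div_rpow_le (r := 2 * s) (by linarith)
  refine ⟨K, hK, fun c hc hX hY ↦ ?_⟩
  have weighted : ∀ M : ℝ, 1 ≤ M → Summable c ∧ ∑' k, c k ≤
      √(K * M * (∑' k, c k ^ 2 + (∑' k : ℤ, (|(k : ℝ)| ^ s * c k) ^ 2) / M ^ (2 * s))) := by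
    intro M hM
    obtain ⟨hsum, hle⟩ := h M hM
    have hweight : ∀ k : ℤ, c k ^ 2 * (1 + (|(k : ℝ)| / M) ^ (2 * s)) =
        c k ^ 2 + (|(k : ℝ)| ^ s * c k) ^ 2 / M ^ (2 * s) := fun k ↦ by
      rw [Real.div_rpow (abs_nonneg _) (by linarith), mul_comm 2 s,
        Real.rpow_mul (abs_nonneg _), Real.rpow_two]
      ring
    have hXY := hX.add (hY.div_const (M ^ (2 * s)))
    obtain ⟨hc_sum, hc_le⟩ := summable_and_tsum_le_sqrt_mul_sqrt_of_weight hc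
      (fun k : ℤ ↦ by positivity) (by simpa only [hweight] using hXY) hsum
    refine ⟨hc_sum, hc_le.trans ?_⟩
    simp only [hweight]
    rw [hX.tsum_add (hY.div_const _), tsum_div_const, mul_comm, Real.sqrt_mul (by positivity)]
    gcongr
  exact ⟨(weighted 1 le_rfl).1, fun M hM ↦ (weighted M hM).2⟩

theorem interpolation_exponents {s : ℝ} (hs : 1 / 2 < s) :
    0 ≤ (1 / 2 : ℝ) * (1 - 1 / (2 * s)) ∧ 0 ≤ 1 / (4 * s) ∧
      (1 / 2 : ℝ) * (1 - 1 / (2 * s)) + 1 / (4 * s) = 1 / 2 := by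
  have : 0 < s := by linarith
  refine ⟨mul_nonneg one_half_pos.le (sub_nonneg.2 ?_), by positivity, ?_⟩
  · exact (div_le_one (by positivity)).2 (by linarith)
  · field_simp
    ring

theorem sqrt_mul_add_div_rpow_eq {s K X Y : ℝ} (hs : 0 < s) (hK : 0 ≤ K) (hX : 0 < X) (hY : 0 < Y) :
    √(K * (Y / X) ^ (1 / (2 * s)) * (X + Y / ((Y / X) ^ (1 / (2 * s))) ^ (2 * s))) =
      √(2 * K) * X ^ ((1 / 2 : ℝ) * (1 - 1 / (2 * s))) * Y ^ (1 / (4 * s)) := by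
  have hM : ((Y / X) ^ (1 / (2 * s))) ^ (2 * s) = Y / X := by
    rw [← Real.rpow_mul (by positivity), one_div_mul_cancel (by positivity), Real.rpow_one]
  have hsplit : K * (Y / X) ^ (1 / (2 * s)) * (X + Y / (Y / X)) =
      2 * K * (X ^ (1 - 1 / (2 * s)) * Y ^ (1 / (2 * s))) := by
    rw [div_div_cancel₀ hY.ne', Real.div_rpow hY.le hX.le, Real.rpow_sub hX, Real.rpow_one]
    ring
  rw [hM, hsplit, Real.sqrt_mul (x := 2 * K) (by positivity),
    Real.sqrt_mul (x := X ^ (1 - 1 / (2 * s))) (by positivity),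
    Real.sqrt_eq_rpow (X ^ _), Real.sqrt_eq_rpow (Y ^ _), ← Real.rpow_mul hX.le,
    ← Real.rpow_mul hY.le, ← mul_assoc]
  congr 2 <;> ring_nf

theorem exists_tsum_le_mul_rpow_mul_rpow {s : ℝ} (hs : 1 / 2 < s) :
    ∃ K : ℝ, 0 < K ∧ ∀ c : ℤ → ℝ, (∀ k, 0 ≤ c k) → c 0 = 0 → (Summable fun k ↦ c k ^ 2) →
      (Summable fun k : ℤ ↦ (|(k : ℝ)| ^ s * c k) ^ 2) →
      Summable c ∧ ∑' k, c k ≤ K * (∑' k, c k ^ 2) ^ ((1 / 2 : ℝ) * (1 - 1 / (2 * s))) *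
        (∑' k : ℤ, (|(k : ℝ)| ^ s * c k) ^ 2) ^ (1 / (4 * s)) := by
  obtain ⟨K, hK, h⟩ := exists_tsum_le_sqrt_mul_add_div_rpow hs
  refine ⟨√(2 * K), by positivity, fun c hc hc0 hX hY ↦ ?_⟩
  obtain ⟨hc_sum, hle⟩ := h c hc hX hY
  refine ⟨hc_sum, ?_⟩
  have hs0 : 0 < s := by linarith
  set X := ∑' k, c k ^ 2
  set Y := ∑' k : ℤ, (|(k : ℝ)| ^ s * c k) ^ 2
  have hXY : X ≤ Y := by
    refine hX.tsum_le_tsum (fun k ↦ ?_) hY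
    rcases eq_or_ne k 0 with rfl | hk
    · simp [hc0]
    · have hk1 : 1 ≤ |(k : ℝ)| ^ s :=
        Real.one_le_rpow (by exact_mod_cast Int.one_le_abs hk) hs0.le
      exact pow_le_pow_left₀ (hc k) (le_mul_of_one_le_left (hc k) hk1) 2
  rcases (tsum_nonneg fun k ↦ sq_nonneg (c k) : 0 ≤ X).eq_or_lt with hX0 | hX0
  · have hc_zero : ∀ k, c k = 0 := fun k ↦ by
      have := (hasSum_zero_iff_of_nonneg fun k ↦ sq_nonneg (c k)).1 (hX0 ▸ hX.hasSum)
      exact pow_eq_zero_iff two_ne_zero |>.1 (congrFun this k)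
    simp only [hc_zero, tsum_zero]
    have : 0 ≤ Y := hX0.le.trans hXY
    positivity
  · -- this choice of `M` makes `X` and `Y / M ^ (2 * s)` equal
    have hM : 1 ≤ (Y / X) ^ (1 / (2 * s)) :=
      Real.one_le_rpow ((one_le_div hX0).2 hXY) (by positivity)
    exact (hle _ hM).trans_eq (sqrt_mul_add_div_rpow_eq hs0 hK.le hX0 (hX0.trans_le hXY))

end Carlson

section Agmon

theorem norm_le_tsum_norm_fourierCoeffOn {a b : ℝ} (hab : a < b) {f : ℝ → ℂ} (hf : Continuous f)
    (hper : f.Periodic (b - a)) (hsum : Summable fun k ↦ ‖fourierCoeffOn hab f k‖) (t : ℝ) :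
    ‖f t‖ ≤ ∑' k, ‖fourierCoeffOn hab f k‖ := by
  obtain ⟨T, rfl⟩ : ∃ T, b = a + T := ⟨b - a, by ring⟩
  rw [add_sub_cancel_left] at hper
  have : Fact (0 < T) := ⟨by linarith⟩
  obtain ⟨y, hy, hty⟩ := hper.exists_mem_Ico (Fact.out : 0 < T) t a
  let F : C(AddCircle T, ℂ) :=
    ⟨AddCircle.liftIco T a f, AddCircle.liftIco_continuous (hper a).symm hf.continuousOn⟩
  have hcoeff : ∀ k, fourierCoeff F k = fourierCoeffOn hab f k := fourierCoeff_liftIco_eq f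
  have hseries := has_pointwise_sum_fourier_series_of_summable (f := F)
    (hsum.of_norm.congr fun k ↦ (hcoeff k).symm) (y : AddCircle T)
  rw [hty, ← AddCircle.liftIco_coe_apply (f := f) hy]
  refine hseries.norm_le_of_bounded hsum.hasSum fun k ↦ ?_
  rw [hcoeff, norm_smul, fourier_apply, Circle.norm_coe, mul_one]

theorem fourierCoeffOn_neg_pi_pi (hπ : -π < π) (f : ℝ → ℂ) (k : ℤ) :
    fourierCoeffOn hπ f k =
      (1 / (2 * π) : ℝ) * ∫ t in Ioo (-π) π, f t * Complex.exp (-Complex.I * k * t) := by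
  have hlen : π - -π = 2 * π := by ring
  rw [fourierCoeffOn_eq_integral, intervalIntegral.integral_of_le hπ.le,
    integral_Ioc_eq_integral_Ioo, Complex.real_smul, hlen]
  congr 2 with t
  rw [fourier_coe_apply, smul_eq_mul, mul_comm]
  congr 2
  push_cast
  field_simp [Complex.ofReal_ne_zero.2 Real.pi_ne_zero]

theorem hasSum_sq_norm_fourierCoeffOn_neg_pi_pi (hπ : -π < π) {f : ℝ → ℝ} (hf : Continuous f) :
    HasSum (fun k ↦ ‖fourierCoeffOn hπ (fun t ↦ (f t : ℂ)) k‖ ^ 2)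
      (1 / (2 * π) * ∫ t in Ioo (-π) π, f t ^ 2) := by
  have hfC : Continuous fun t ↦ (f t : ℂ) := Complex.continuous_ofReal.comp hf
  have hL2 : MemLp (fun t ↦ (f t : ℂ)) 2 (volume.restrict (Ioc (-π) π)) :=
    (memLp_two_iff_integrable_sq_norm hfC.aestronglyMeasurable).2
      ((hfC.norm.pow 2).integrableOn_Ioc)
  have hlen : π - -π = 2 * π := by ring
  simpa only [intervalIntegral.integral_of_le hπ.le, integral_Ioc_eq_integral_Ioo, hlen,
    Complex.norm_real, Real.norm_eq_abs, sq_abs, smul_eq_mul, one_div]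
    using hasSum_sq_fourierCoeffOn hπ hL2

/-- `h` is the fractional derivative `∂^s g` of the `2π`-periodic function `g`: on `(-π, π)` the
`k`-th Fourier coefficient of `h` is `|k| ^ s` times that of `g`. -/
def IsFracDeriv (s : ℝ) (g h : ℝ → ℝ) : Prop :=
  ∀ k : ℤ, ∫ t in Ioo (-π) π, (h t : ℂ) * Complex.exp (-Complex.I * (k : ℂ) * (t : ℂ)) =
    (|(k : ℝ)| ^ s : ℝ) *
      ∫ t in Ioo (-π) π, (g t : ℂ) * Complex.exp (-Complex.I * (k : ℂ) * (t : ℂ))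

theorem IsFracDeriv.fourierCoeffOn_eq {s : ℝ} {g h : ℝ → ℝ} (hgh : IsFracDeriv s g h)
    (hπ : -π < π) (k : ℤ) :
    fourierCoeffOn hπ (fun t ↦ (h t : ℂ)) k =
      (|(k : ℝ)| ^ s : ℝ) * fourierCoeffOn hπ (fun t ↦ (g t : ℂ)) k := by
  rw [fourierCoeffOn_neg_pi_pi, fourierCoeffOn_neg_pi_pi, hgh k, mul_left_comm]

theorem exists_abs_le_of_isFracDeriv {s : ℝ} (hs : 1 / 2 < s) :
    ∃ K : ℝ, 0 < K ∧ ∀ g h : ℝ → ℝ, Continuous g → Continuous h → g.Periodic (2 * π) →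
      ∫ t in Ioo (-π) π, g t = 0 → IsFracDeriv s g h → ∀ t, |g t| ≤
        K * (∫ t in Ioo (-π) π, g t ^ 2) ^ ((1 / 2 : ℝ) * (1 - 1 / (2 * s))) *
          (∫ t in Ioo (-π) π, h t ^ 2) ^ (1 / (4 * s)) := by
  obtain ⟨K, hK, hcarlson⟩ := exists_tsum_le_mul_rpow_mul_rpow hs
  refine ⟨K * (1 / (2 * π)) ^ ((1 / 2 : ℝ) * (1 - 1 / (2 * s))) * (1 / (2 * π)) ^ (1 / (4 * s)),
    by positivity, fun g h hg hh hper hmean hgh t ↦ ?_⟩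
  have hπ : -π < π := by linarith [Real.pi_pos]
  set c : ℤ → ℂ := fourierCoeffOn hπ fun t ↦ (g t : ℂ)
  have hc0 : ‖c 0‖ = 0 := by
    simp only [c, fourierCoeffOn_neg_pi_pi, Int.cast_zero, mul_zero, zero_mul, Complex.exp_zero,
      mul_one, integral_complex_ofReal, hmean, Complex.ofReal_zero, norm_zero]
  have hg2 := hasSum_sq_norm_fourierCoeffOn_neg_pi_pi hπ hg
  have hh2 : HasSum (fun k : ℤ ↦ (|(k : ℝ)| ^ s * ‖c k‖) ^ 2)
      (1 / (2 * π) * ∫ t in Ioo (-π) π, h t ^ 2) := by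
    refine (hasSum_sq_norm_fourierCoeffOn_neg_pi_pi hπ hh).congr_fun fun k ↦ ?_
    rw [hgh.fourierCoeffOn_eq, norm_mul, Complex.norm_real, Real.norm_of_nonneg (by positivity)]
  obtain ⟨hsum, hle⟩ := hcarlson (fun k ↦ ‖c k‖) (fun k ↦ norm_nonneg _) hc0
    hg2.summable hh2.summable
  have hsup : |g t| ≤ ∑' k, ‖c k‖ := by
    rw [← Real.norm_eq_abs, ← Complex.norm_real]
    refine norm_le_tsum_norm_fourierCoeffOn hπ (Complex.continuous_ofReal.comp hg) (fun x ↦ ?_)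
      hsum t
    rw [show x + (π - -π) = x + 2 * π by ring, Function.comp_apply, hper x, Function.comp_apply]
  rw [hg2.tsum_eq, hh2.tsum_eq,
    Real.mul_rpow (by positivity) (integral_nonneg fun t ↦ sq_nonneg (g t)),
    Real.mul_rpow (by positivity) (integral_nonneg fun t ↦ sq_nonneg (h t))] at hle
  exact (hsup.trans hle).trans_eq (by ring)

theorem exists_sqrt_sum_sq_le_of_isFracDeriv (ι : Type*) [Fintype ι] {s : ℝ} (hs : 1 / 2 < s) :
    ∃ K : ℝ, 0 < K ∧ ∀ g h : ι → ℝ → ℝ, (∀ i, Continuous (g i)) → (∀ i, Continuous (h i)) →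
      (∀ i, (g i).Periodic (2 * π)) → (∀ i, ∫ t in Ioo (-π) π, g i t = 0) →
      (∀ i, IsFracDeriv s (g i) (h i)) → ∀ t, √(∑ i, g i t ^ 2) ≤
        K * (∫ t in Ioo (-π) π, ∑ i, g i t ^ 2) ^ ((1 / 2 : ℝ) * (1 - 1 / (2 * s))) *
          (∫ t in Ioo (-π) π, ∑ i, h i t ^ 2) ^ (1 / (4 * s)) := by
  obtain ⟨K, hK, hagmon⟩ := exists_abs_le_of_isFracDeriv hs
  refine ⟨(√(Fintype.card ι) + 1) * K, by positivity, fun g h hg hh hper hmean hgh t ↦ ?_⟩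
  obtain ⟨hα, -, -⟩ := interpolation_exponents hs
  have hint_le : ∀ f : ι → ℝ → ℝ, (∀ i, Continuous (f i)) → ∀ i,
      ∫ t in Ioo (-π) π, f i t ^ 2 ≤ ∫ t in Ioo (-π) π, ∑ i, f i t ^ 2 := fun f hf i ↦
    setIntegral_mono (((hf i).pow 2).integrableOn_Icc.mono_set Ioo_subset_Icc_self)
      ((continuous_finsetSum _ fun i _ ↦ (hf i).pow 2).integrableOn_Icc.mono_set
        Ioo_subset_Icc_self)
      fun t ↦ Finset.single_le_sum (f := fun i ↦ f i t ^ 2) (fun i _ ↦ sq_nonneg _)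
        (Finset.mem_univ i)
  have hint_nonneg : ∀ f : ℝ → ℝ, 0 ≤ ∫ t in Ioo (-π) π, f t ^ 2 := fun f ↦
    integral_nonneg fun t ↦ sq_nonneg (f t)
  set B := K * (∫ t in Ioo (-π) π, ∑ i, g i t ^ 2) ^ ((1 / 2 : ℝ) * (1 - 1 / (2 * s))) *
    (∫ t in Ioo (-π) π, ∑ i, h i t ^ 2) ^ (1 / (4 * s))
  have hB : ∀ i, |g i t| ≤ B := fun i ↦ by
    refine (hagmon (g i) (h i) (hg i) (hh i) (hper i) (hmean i) (hgh i) t).trans ?_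
    have := hint_nonneg (g i)
    have := hint_nonneg (h i)
    have := hint_le g hg i
    have := hint_le h hh i
    simp only [B]
    gcongr
  have hB0 : 0 ≤ B := by positivity
  calc √(∑ i, g i t ^ 2) ≤ √(∑ _i : ι, B ^ 2) := by
        gcongr √(∑ i, ?_) with i
        exact sq_le_sq.2 ((hB i).trans (le_abs_self B))
    _ = √(Fintype.card ι) * B := by
        rw [Finset.sum_const, nsmul_eq_mul, Finset.card_univ, Real.sqrt_mul (by positivity),
          Real.sqrt_sq hB0]
    _ ≤ (√(Fintype.card ι) + 1) * B := by
        gcongr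
        exact le_add_of_nonneg_right zero_le_one
    _ = _ := by ring

end Agmon

section Holder

theorem abs_sum_mul_le_sqrt_mul_sqrt {ι : Type*} (s : Finset ι) (f g : ι → ℝ) :
    |∑ i ∈ s, f i * g i| ≤ √(∑ i ∈ s, f i ^ 2) * √(∑ i ∈ s, g i ^ 2) := by
  rw [← Real.sqrt_mul (Finset.sum_nonneg fun i _ ↦ sq_nonneg (f i))]
  exact Real.abs_le_sqrt (Finset.sum_mul_sq_le_sq_mul_sq s f g)

theorem enorm_sqrt {x : ℝ} (hx : 0 ≤ x) : ‖√x‖ₑ = ‖x‖ₑ ^ (1 / 2 : ℝ) := by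
  rw [Real.sqrt_eq_rpow, Real.enorm_rpow_of_nonneg hx (by norm_num)]

theorem lintegral_enorm_eq_enorm_integral {X : Type*} [MeasurableSpace X] {μ : Measure X}
    {f : X → ℝ} (hf : Integrable f μ) (hf0 : ∀ x, 0 ≤ f x) :
    ∫⁻ x, ‖f x‖ₑ ∂μ = ‖∫ x, f x ∂μ‖ₑ := by
  rw [← ofReal_integral_norm_eq_lintegral_enorm hf, Real.enorm_of_nonneg (integral_nonneg hf0)]
  simp only [Real.norm_of_nonneg (hf0 _)]

theorem lintegral_enorm_sqrt_mul_sqrt_le {X : Type*} [MeasurableSpace X] {μ : Measure X}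
    {f g : X → ℝ} (hf : Integrable f μ) (hg : Integrable g μ) (hf0 : ∀ x, 0 ≤ f x)
    (hg0 : ∀ x, 0 ≤ g x) :
    ∫⁻ x, ‖√(f x) * √(g x)‖ₑ ∂μ ≤ ‖√(∫ x, f x ∂μ) * √(∫ x, g x ∂μ)‖ₑ := by
  simp only [enorm_mul, enorm_sqrt (hf0 _), enorm_sqrt (hg0 _),
    enorm_sqrt (integral_nonneg hf0), enorm_sqrt (integral_nonneg hg0)]
  rw [← lintegral_enorm_eq_enorm_integral hf hf0, ← lintegral_enorm_eq_enorm_integral hg hg0]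
  exact ENNReal.lintegral_mul_norm_pow_le hf.aestronglyMeasurable.enorm
    hg.aestronglyMeasurable.enorm (by norm_num) (by norm_num) (by norm_num)

theorem lintegral_rpow_mul_rpow_mul_sqrt_mul_sqrt_le {X : Type*} [MeasurableSpace X]
    {μ : Measure X} {f g h k : X → ℝ≥0∞} (hf : AEMeasurable f μ) (hg : AEMeasurable g μ)
    (hh : AEMeasurable h μ) (hk : AEMeasurable k μ) {α β : ℝ} (hα : 0 ≤ α) (hβ : 0 ≤ β)
    (hαβ : α + β = 1 / 2) :
    ∫⁻ x, f x ^ α * g x ^ β * (h x ^ (1 / 2 : ℝ) * k x ^ (1 / 2 : ℝ)) ∂μ ≤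
      (∫⁻ x, f x ∂μ) ^ α * (∫⁻ x, g x ∂μ) ^ β *
        ((∫⁻ x, h x ^ (2 : ℝ) ∂μ) ^ (1 / 4 : ℝ) * (∫⁻ x, k x ^ (2 : ℝ) ∂μ) ^ (1 / 4 : ℝ)) := by
  have hsqrt : ∀ z : ℝ≥0∞, z ^ (1 / 2 : ℝ) = (z ^ (2 : ℝ)) ^ (1 / 4 : ℝ) := fun z ↦ by
    rw [← ENNReal.rpow_mul]
    norm_num
  have := ENNReal.lintegral_prod_norm_pow_le (μ := μ) Finset.univ
    (f := ![f, g, fun x ↦ h x ^ (2 : ℝ), fun x ↦ k x ^ (2 : ℝ)]) (p := ![α, β, 1 / 4, 1 / 4])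
    (by simpa [Fin.forall_fin_succ] using ⟨hf, hg, hh.pow_const 2, hk.pow_const 2⟩)
    (by rw [Fin.sum_univ_four]; simp only [Matrix.cons_val]; linarith)
    (by simpa [Fin.forall_fin_succ] using ⟨hα, hβ⟩)
  simpa only [hsqrt, Fin.prod_univ_four, Matrix.cons_val, mul_assoc] using this

end Holder

section VerticalIntegral

theorem integrableOn_prod_Ioo {E G : Type*} [NormedAddCommGroup E] [ProperSpace E]
    [MeasurableSpace E] [BorelSpace E] [NormedAddCommGroup G]
    (μ : Measure (E × ℝ)) [IsFiniteMeasureOnCompacts μ] {Ω : Set E} (hΩ : Bornology.IsBounded Ω)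
    {f : E × ℝ → G} (hf : Continuous f) (a b : ℝ) : IntegrableOn f (Ω ×ˢ Ioo a b) μ :=
  (hf.continuousOn.integrableOn_compact (hΩ.isCompact_closure.prod isCompact_Icc)).mono_set
    (prod_mono subset_closure Ioo_subset_Icc_self)

theorem lintegral_enorm_setIntegral_eq {E : Type*} [NormedAddCommGroup E] [ProperSpace E]
    [MeasurableSpace E] [BorelSpace E] (μ : Measure E) [IsFiniteMeasureOnCompacts μ] [SFinite μ]
    {Ω : Set E} (hΩ : Bornology.IsBounded Ω) {f : E × ℝ → ℝ} (hf : Continuous f)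
    (hf0 : ∀ x, 0 ≤ f x) (a b : ℝ) :
    ∫⁻ p in Ω, ‖∫ t in Ioo a b, f (p, t)‖ₑ ∂μ = ‖∫ x in Ω ×ˢ Ioo a b, f x ∂μ.prod volume‖ₑ := by
  have hint := integrableOn_prod_Ioo (μ.prod volume) hΩ hf a b
  have hfiber0 : ∀ p, 0 ≤ ∫ t in Ioo a b, f (p, t) := fun p ↦ integral_nonneg fun t ↦ hf0 (p, t)
  rw [IntegrableOn, ← Measure.prod_restrict] at hint
  rw [lintegral_enorm_eq_enorm_integral hint.integral_prod_left hfiber0, ← Measure.prod_restrict,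
    integral_prod _ hint]

theorem continuous_setIntegral_Ioo {X G : Type*} [TopologicalSpace X] [FirstCountableTopology X]
    [LocallyCompactSpace X] [NormedAddCommGroup G] [NormedSpace ℝ G] {f : X × ℝ → G}
    (hf : Continuous f) (a b : ℝ) : Continuous fun p ↦ ∫ t in Ioo a b, f (p, t) := by
  simp only [← integral_Icc_eq_integral_Ioo]
  exact continuous_parametric_integral_of_continuous (f := fun p t ↦ f (p, t)) hf isCompact_Icc

theorem setLIntegral_enorm_prod_le_of_fiber_le {E : Type*} [NormedAddCommGroup E] [ProperSpace E]
    [MeasurableSpace E] [BorelSpace E] (μ : Measure E) [IsFiniteMeasureOnCompacts μ] [SFinite μ]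
    {Ω : Set E} (hΩ : Bornology.IsBounded Ω) {a b K α β : ℝ} (hα : 0 ≤ α) (hβ : 0 ≤ β)
    (hαβ : α + β = 1 / 2) {f A B P R : E × ℝ → ℝ} (hf : Continuous f) (hA : Continuous A)
    (hB : Continuous B) (hP : Continuous P) (hR : Continuous R) (hA0 : ∀ x, 0 ≤ A x)
    (hB0 : ∀ x, 0 ≤ B x) (hP0 : ∀ x, 0 ≤ P x) (hR0 : ∀ x, 0 ≤ R x)
    (hfiber : ∀ p, ∫⁻ t in Ioo a b, ‖f (p, t)‖ₑ ≤
      ‖K * (∫ t in Ioo a b, A (p, t)) ^ α * (∫ t in Ioo a b, B (p, t)) ^ β *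
        (√(∫ t in Ioo a b, P (p, t)) * √(∫ t in Ioo a b, R (p, t)))‖ₑ) :
    ∫⁻ x in Ω ×ˢ Ioo a b, ‖f x‖ₑ ∂μ.prod volume ≤
      ‖K‖ₑ * (‖∫ x in Ω ×ˢ Ioo a b, A x ∂μ.prod volume‖ₑ ^ α *
        ‖∫ x in Ω ×ˢ Ioo a b, B x ∂μ.prod volume‖ₑ ^ β *
        ((∫⁻ p, ‖∫ t in Ioo a b, P (p, t)‖ₑ ^ (2 : ℝ) ∂μ) ^ (1 / 4 : ℝ) *
          (∫⁻ p, ‖∫ t in Ioo a b, R (p, t)‖ₑ ^ (2 : ℝ) ∂μ) ^ (1 / 4 : ℝ))) := by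
  have hmeas : ∀ {h : E × ℝ → ℝ}, Continuous h →
      AEMeasurable (fun p ↦ ‖∫ t in Ioo a b, h (p, t)‖ₑ) (μ.restrict Ω) := fun hh ↦
    (continuous_setIntegral_Ioo hh a b).enorm.measurable.aemeasurable
  have hnonneg : ∀ {h : E × ℝ → ℝ}, (∀ x, 0 ≤ h x) → ∀ p, 0 ≤ ∫ t in Ioo a b, h (p, t) :=
    fun hh p ↦ integral_nonneg fun t ↦ hh (p, t)
  simp only [enorm_mul, enorm_sqrt (hnonneg hP0 _), enorm_sqrt (hnonneg hR0 _),
    Real.enorm_rpow_of_nonneg (hnonneg hA0 _) hα, Real.enorm_rpow_of_nonneg (hnonneg hB0 _) hβ,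
    mul_assoc ‖K‖ₑ] at hfiber
  rw [← Measure.prod_restrict, lintegral_prod _ hf.enorm.measurable.aemeasurable,
    Measure.prod_restrict, ← lintegral_enorm_setIntegral_eq μ hΩ hA hA0,
    ← lintegral_enorm_setIntegral_eq μ hΩ hB hB0]
  refine (lintegral_mono hfiber).trans ?_
  rw [lintegral_const_mul' _ _ enorm_ne_top]
  gcongr
  refine (lintegral_rpow_mul_rpow_mul_sqrt_mul_sqrt_le (hmeas hA) (hmeas hB) (hmeas hP) (hmeas hR)
    hα hβ hαβ).trans ?_
  gcongr <;> exact Measure.restrict_le_self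

variable {E G : Type*} [NormedAddCommGroup E] [NormedSpace ℝ E] [NormedAddCommGroup G]
  [NormedSpace ℝ G]

theorem hasFDerivAt_setIntegral_Ioo [ProperSpace E] {F : E × ℝ → G} (hF : ContDiff ℝ 1 F)
    (a b : ℝ) (p : E) :
    HasFDerivAt (fun p ↦ ∫ t in Ioo a b, F (p, t))
      (∫ t in Ioo a b, fderiv ℝ F (p, t) ∘L .inl ℝ E ℝ) p := by
  have hF' : Continuous fun x ↦ fderiv ℝ F x ∘L .inl ℝ E ℝ :=
    (hF.continuous_fderiv one_ne_zero).clm_comp_const _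
  obtain ⟨C, hC⟩ := ((isCompact_closedBall p 1).prod
    (isCompact_Icc (a := a) (b := b))).exists_bound_of_continuousOn hF'.continuousOn
  refine hasFDerivAt_integral_of_dominated_of_fderiv_le (bound := fun _ ↦ C)
    (F := fun p t ↦ F (p, t)) (F' := fun p t ↦ fderiv ℝ F (p, t) ∘L .inl ℝ E ℝ)
    (Metric.closedBall_mem_nhds p one_pos) (.of_forall fun q ↦ ?_) ?_ ?_ ?_ (integrable_const C)
    (.of_forall fun t q _ ↦ ?_)
  · exact (hF.continuous.comp (.prodMk_right q)).aestronglyMeasurable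
  · exact (hF.continuous.comp (.prodMk_right p)).integrableOn_Icc.mono_set Ioo_subset_Icc_self
  · exact (hF'.comp (.prodMk_right p)).aestronglyMeasurable
  · filter_upwards [ae_restrict_mem measurableSet_Ioo] with t ht q hq
    exact hC (q, t) ⟨hq, Ioo_subset_Icc_self ht⟩
  · exact (hF.differentiable one_ne_zero (q, t)).hasFDerivAt.comp q (hasFDerivAt_prodMk_left q t)

theorem contDiff_setIntegral_Ioo [ProperSpace E] {F : E × ℝ → G} (hF : ContDiff ℝ 1 F) (a b : ℝ) :
    ContDiff ℝ 1 fun p ↦ ∫ t in Ioo a b, F (p, t) := by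
  rw [contDiff_one_iff_fderiv]
  refine ⟨fun p ↦ (hasFDerivAt_setIntegral_Ioo hF a b p).differentiableAt, ?_⟩
  have hfderiv : (fderiv ℝ fun p ↦ ∫ t in Ioo a b, F (p, t)) =
      fun p ↦ ∫ t in Icc a b, fderiv ℝ F (p, t) ∘L .inl ℝ E ℝ := by
    funext p
    rw [(hasFDerivAt_setIntegral_Ioo hF a b p).fderiv, integral_Icc_eq_integral_Ioo]
  rw [hfderiv]
  exact continuous_parametric_integral_of_continuous (μ := volume)
    (f := fun p t ↦ fderiv ℝ F (p, t) ∘L .inl ℝ E ℝ)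
    ((hF.continuous_fderiv one_ne_zero).clm_comp_const _) isCompact_Icc

theorem integral_fderiv_eq_zero_of_integral_eq_zero [ProperSpace E] [CompleteSpace G]
    {F : E × ℝ → G} (hF : ContDiff ℝ 1 F) {a b : ℝ} (hab : a ≤ b) (hends : ∀ p, F (p, a) = F (p, b))
    (hmean : ∀ p, ∫ t in Ioo a b, F (p, t) = 0) (p : E) (y : E × ℝ) :
    ∫ t in Ioo a b, fderiv ℝ F (p, t) y = 0 := by
  have hF' : Continuous fun t : ℝ ↦ fderiv ℝ F (p, t) :=
    (hF.continuous_fderiv one_ne_zero).comp (.prodMk_right p)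
  have hhor : ∀ q : E, ∫ t in Ioo a b, fderiv ℝ F (p, t) (q, 0) = 0 := fun q ↦ by
    have hderiv := hasFDerivAt_setIntegral_Ioo hF a b p
    simp only [hmean] at hderiv
    have hzero := DFunLike.congr_fun (hderiv.unique (hasFDerivAt_const 0 p)) q
    have hint : IntegrableOn (fun t ↦ fderiv ℝ F (p, t) ∘L .inl ℝ E ℝ) (Ioo a b) :=
      (hF'.clm_comp_const _).integrableOn_Icc.mono_set Ioo_subset_Icc_self
    rw [ContinuousLinearMap.integral_apply hint] at hzero
    simpa using hzero
  have hvert : ∫ t in Ioo a b, fderiv ℝ F (p, t) (0, 1) = 0 := by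
    have hderiv : ∀ t, HasDerivAt (fun t ↦ F (p, t)) (fderiv ℝ F (p, t) (0, 1)) t := fun t ↦
      (hF.differentiable one_ne_zero (p, t)).hasFDerivAt.comp_hasDerivAt t
        ((hasDerivAt_const t p).prodMk (hasDerivAt_id t))
    rw [← integral_Ioc_eq_integral_Ioo, ← intervalIntegral.integral_of_le hab,
      intervalIntegral.integral_eq_sub_of_hasDerivAt (fun t _ ↦ hderiv t)
        ((hF'.clm_apply continuous_const).intervalIntegrable a b), hends, sub_self]
  have hint : ∀ z : E × ℝ, IntegrableOn (fun t ↦ fderiv ℝ F (p, t) z) (Ioo a b) := fun z ↦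
    (hF'.clm_apply continuous_const).integrableOn_Icc.mono_set Ioo_subset_Icc_self
  have hy : y = (y.1, 0) + y.2 • ((0, 1) : E × ℝ) := by ext <;> simp
  rw [hy]
  simp only [map_add, map_smul]
  rw [integral_add (hint _) ((hint _).fun_smul y.2), integral_smul, hhor, hvert, smul_zero,
    add_zero]

theorem lintegral_enorm_setIntegral_rpow_le [FiniteDimensional ℝ E] [MeasurableSpace E]
    [BorelSpace E] (μ : Measure E) [μ.IsAddHaarMeasure] {r : ℝ}
    (hr : (Module.finrank ℝ E : ℝ).HolderConjugate r) {Ω : Set E} (hΩ : Bornology.IsBounded Ω)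
    {F : E × ℝ → ℝ} (hF : ContDiff ℝ 1 F) (hF0 : ∀ x, 0 ≤ F x)
    (hFΩ : ∀ p t, p ∉ Ω → F (p, t) = 0) (a b : ℝ) :
    ∫⁻ p, ‖∫ t in Ioo a b, F (p, t)‖ₑ ^ r ∂μ ≤ lintegralPowLePowLIntegralFDerivConst μ r *
      (∫⁻ x in Ω ×ˢ Ioo a b, ‖fderiv ℝ F x‖ₑ ∂μ.prod volume) ^ r := by
  set U : E → ℝ := fun p ↦ ∫ t in Ioo a b, F (p, t)
  have hU0 : ∀ p, 0 ≤ U p := fun p ↦ integral_nonneg fun t ↦ hF0 (p, t)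
  have hUΩ : ∀ p, p ∉ Ω → U p = 0 := fun p hp ↦ by simp [U, hFΩ p _ hp]
  have hUsupp : HasCompactSupport U :=
    .of_support_subset_isCompact hΩ.isCompact_closure fun p hp ↦
      subset_closure (not_imp_comm.1 (hUΩ p) hp)
  -- a zero of the nonnegative function `U` is a minimum
  have hU'supp : (Function.support fun p ↦ ‖fderiv ℝ U p‖ₑ) ⊆ Ω := fun p hp ↦ by
    by_contra hpΩ
    have hmin : IsLocalMin U p := .of_forall fun q ↦ (hUΩ p hpΩ).trans_le (hU0 q)
    have hzero : ‖fderiv ℝ U p‖ₑ = 0 := by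
      rw [hmin.fderiv_eq_zero, enorm_zero (E := E →L[ℝ] ℝ)]
    exact hp hzero
  have hU' : ∀ p, ‖fderiv ℝ U p‖ₑ ≤ ∫⁻ t in Ioo a b, ‖fderiv ℝ F (p, t)‖ₑ := fun p ↦ by
    rw [(hasFDerivAt_setIntegral_Ioo hF a b p).fderiv]
    refine (enorm_integral_le_lintegral_enorm _).trans (lintegral_mono fun t ↦ ?_)
    rw [enorm_le_iff_norm_le]
    exact (ContinuousLinearMap.opNorm_comp_le _ _).trans
      (mul_le_of_le_one_right (norm_nonneg _) (ContinuousLinearMap.norm_inl_le_one ℝ E ℝ))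
  refine (lintegral_pow_le_pow_lintegral_fderiv μ (contDiff_setIntegral_Ioo hF a b)
    hUsupp hr).trans ?_
  gcongr
  · exact hr.symm.nonneg
  rw [← setLIntegral_eq_of_support_subset hU'supp, ← Measure.prod_restrict,
    lintegral_prod _ (hF.continuous_fderiv one_ne_zero).enorm.measurable.aemeasurable]
  exact lintegral_mono hU'

end VerticalIntegral

section Ladyzhenskaya

variable {ι : Type*} [Fintype ι]

/-- The squared Frobenius norm `|∇u|²` of the gradient of a vector field on the cylinder, i.e. the
sum of the squares of all first partial derivatives. -/
noncomputable def gradSq (u : (ℝ × ℝ) × ℝ → ι → ℝ) (x : (ℝ × ℝ) × ℝ) : ℝ :=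
  ∑ i, ∑ j, fderiv ℝ u x (dir3 j) i ^ 2

theorem gradSq_nonneg (u : (ℝ × ℝ) × ℝ → ι → ℝ) (x : (ℝ × ℝ) × ℝ) : 0 ≤ gradSq u x :=
  Finset.sum_nonneg fun _ _ ↦ Finset.sum_nonneg fun _ _ ↦ sq_nonneg _

theorem continuous_fderiv_apply_apply {E : Type*} [NormedAddCommGroup E] [NormedSpace ℝ E]
    {u : E → ι → ℝ} (hu : ContDiff ℝ 1 u) (y : E) (i : ι) :
    Continuous fun x ↦ fderiv ℝ u x y i :=
  (continuous_apply i).comp ((hu.continuous_fderiv one_ne_zero).clm_apply continuous_const)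

theorem continuous_gradSq {u : (ℝ × ℝ) × ℝ → ι → ℝ} (hu : ContDiff ℝ 1 u) :
    Continuous (gradSq u) :=
  continuous_finsetSum _ fun i _ ↦ continuous_finsetSum _ fun j _ ↦
    (continuous_fderiv_apply_apply hu (dir3 j) i).pow 2

theorem sqrt_sum_sq_fderiv_le (u : (ℝ × ℝ) × ℝ → ι → ℝ) (x y : (ℝ × ℝ) × ℝ) :
    √(∑ i, fderiv ℝ u x y i ^ 2) ≤ 2 * ‖y‖ * √(gradSq u x) := by
  let c : Fin 3 → ℝ := ![y.1.1, y.1.2, y.2]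
  have hy : y = ∑ j, c j • dir3 j := by
    ext <;> simp [c, dir3, Fin.sum_univ_three]
  have hc : ∑ j, c j ^ 2 ≤ (2 * ‖y‖) ^ 2 := by
    have h1 : |y.1.1| ≤ ‖y‖ := (norm_fst_le y.1).trans (norm_fst_le y)
    have h2 : |y.1.2| ≤ ‖y‖ := (norm_snd_le y.1).trans (norm_fst_le y)
    have h3 : |y.2| ≤ ‖y‖ := norm_snd_le y
    simp only [c, Fin.sum_univ_three, Matrix.cons_val]
    nlinarith [sq_le_sq' (abs_le.1 h1).1 (abs_le.1 h1).2,
      sq_le_sq' (abs_le.1 h2).1 (abs_le.1 h2).2, sq_le_sq' (abs_le.1 h3).1 (abs_le.1 h3).2]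
  have hcoord : ∀ i, fderiv ℝ u x y i = ∑ j, c j * fderiv ℝ u x (dir3 j) i := fun i ↦ by
    conv_lhs => rw [hy]
    simp only [map_sum, map_smul, Finset.sum_apply, Pi.smul_apply, smul_eq_mul]
  have hsq : ∑ i, fderiv ℝ u x y i ^ 2 ≤ (2 * ‖y‖) ^ 2 * gradSq u x :=
    calc ∑ i, fderiv ℝ u x y i ^ 2
        ≤ ∑ i, (∑ j, c j ^ 2) * ∑ j, fderiv ℝ u x (dir3 j) i ^ 2 := by
          gcongr with i
          rw [hcoord]
          exact Finset.sum_mul_sq_le_sq_mul_sq _ _ _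
      _ = (∑ j, c j ^ 2) * gradSq u x := (Finset.mul_sum ..).symm
      _ ≤ _ := mul_le_mul_of_nonneg_right hc (gradSq_nonneg u x)
  calc √(∑ i, fderiv ℝ u x y i ^ 2) ≤ √((2 * ‖y‖) ^ 2 * gradSq u x) := Real.sqrt_le_sqrt hsq
    _ = _ := by rw [Real.sqrt_mul (sq_nonneg _), Real.sqrt_sq (by positivity)]

theorem norm_fderiv_sum_sq_le {u : (ℝ × ℝ) × ℝ → ι → ℝ} {x : (ℝ × ℝ) × ℝ}
    (hu : DifferentiableAt ℝ u x) :
    ‖fderiv ℝ (fun x ↦ ∑ i, u x i ^ 2) x‖ ≤ 4 * (√(∑ i, u x i ^ 2) * √(gradSq u x)) := by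
  have hderiv := HasFDerivAt.fun_sum fun i (_ : i ∈ Finset.univ) ↦
    (hasFDerivAt_pi'.1 hu.hasFDerivAt i).pow 2
  have happly : ∀ y, fderiv ℝ (fun x ↦ ∑ i, u x i ^ 2) x y =
      2 * ∑ i, u x i * fderiv ℝ u x y i := fun y ↦ by
    rw [hderiv.fderiv]
    simp [Finset.mul_sum, mul_assoc]
  refine ContinuousLinearMap.opNorm_le_bound _ (by positivity) fun y ↦ ?_
  rw [happly, norm_mul, Real.norm_two, Real.norm_eq_abs]
  calc 2 * |∑ i, u x i * fderiv ℝ u x y i|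
      ≤ 2 * (√(∑ i, u x i ^ 2) * √(∑ i, fderiv ℝ u x y i ^ 2)) := by
        gcongr
        exact abs_sum_mul_le_sqrt_mul_sqrt _ _ _
    _ ≤ 2 * (√(∑ i, u x i ^ 2) * (2 * ‖y‖ * √(gradSq u x))) := by
        gcongr
        exact sqrt_sum_sq_fderiv_le u x y
    _ = _ := by ring

theorem exists_lintegral_sq_setIntegral_sum_sq_le (ι : Type*) [Fintype ι] :
    ∃ K : ℝ, 0 < K ∧ ∀ {Ω : Set (ℝ × ℝ)}, Bornology.IsBounded Ω → ∀ {u : (ℝ × ℝ) × ℝ → ι → ℝ},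
      ContDiff ℝ 1 u → (∀ p t, p ∉ Ω → u (p, t) = 0) → ∀ a b : ℝ,
      ∫⁻ p, ‖∫ t in Ioo a b, ∑ i, u (p, t) i ^ 2‖ₑ ^ (2 : ℝ) ≤
        ‖K * ((∫ x in Ω ×ˢ Ioo a b, ∑ i, u x i ^ 2) * ∫ x in Ω ×ˢ Ioo a b, gradSq u x)‖ₑ := by
  have hr : (Module.finrank ℝ (ℝ × ℝ) : ℝ).HolderConjugate 2 := by
    simpa using Real.HolderConjugate.two_two
  set c : ℝ≥0 := lintegralPowLePowLIntegralFDerivConst (volume : Measure (ℝ × ℝ)) 2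
  refine ⟨16 * (c + 1), by positivity, fun {Ω} hΩ {u} hu huΩ a b ↦ ?_⟩
  have hui : ∀ i, ContDiff ℝ 1 fun x ↦ u x i := contDiff_pi.1 hu
  have hF : ContDiff ℝ 1 fun x ↦ ∑ i, u x i ^ 2 := ContDiff.sum fun i _ ↦ (hui i).pow 2
  have hF0 : ∀ x, 0 ≤ ∑ i, u x i ^ 2 := fun x ↦ Finset.sum_nonneg fun i _ ↦ sq_nonneg (u x i)
  set P := ∫ x in Ω ×ˢ Ioo a b, ∑ i, u x i ^ 2
  set Q := ∫ x in Ω ×ˢ Ioo a b, gradSq u x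
  have hP : 0 ≤ P := integral_nonneg hF0
  have hQ : 0 ≤ Q := integral_nonneg (gradSq_nonneg u)
  have hgrad : ∫⁻ x in Ω ×ˢ Ioo a b, ‖fderiv ℝ (fun x ↦ ∑ i, u x i ^ 2) x‖ₑ ≤
      ‖4 * (√P * √Q)‖ₑ :=
    calc _ ≤ ∫⁻ x in Ω ×ˢ Ioo a b, ‖(4 : ℝ)‖ₑ * ‖√(∑ i, u x i ^ 2) * √(gradSq u x)‖ₑ := by
          refine lintegral_mono fun x ↦ ?_
          rw [← enorm_mul, enorm_le_iff_norm_le]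
          exact (norm_fderiv_sum_sq_le (hu.differentiable one_ne_zero x)).trans (le_abs_self _)
      _ ≤ ‖(4 : ℝ)‖ₑ * ‖√P * √Q‖ₑ := by
          rw [lintegral_const_mul' _ _ enorm_ne_top]
          gcongr
          exact lintegral_enorm_sqrt_mul_sqrt_le (integrableOn_prod_Ioo _ hΩ hF.continuous a b)
            (integrableOn_prod_Ioo _ hΩ (continuous_gradSq hu) a b) hF0 (gradSq_nonneg u)
      _ = _ := (enorm_mul ..).symm
  calc _ ≤ c * (∫⁻ x in Ω ×ˢ Ioo a b, ‖fderiv ℝ (fun x ↦ ∑ i, u x i ^ 2) x‖ₑ) ^ (2 : ℝ) :=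
        lintegral_enorm_setIntegral_rpow_le volume hr hΩ hF hF0
          (fun p t hp ↦ by simp [huΩ p t hp]) a b
    _ ≤ ‖(c : ℝ)‖ₑ * ‖4 * (√P * √Q)‖ₑ ^ (2 : ℝ) := by
        rw [NNReal.enorm_eq]
        gcongr
    _ = ‖c * (16 * (P * Q))‖ₑ := by
        rw [ENNReal.rpow_two, ← enorm_pow, ← enorm_mul, mul_pow, mul_pow, Real.sq_sqrt hP,
          Real.sq_sqrt hQ]
        norm_num
    _ ≤ _ := by
        rw [enorm_le_iff_norm_le, Real.norm_of_nonneg (by positivity),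
          Real.norm_of_nonneg (by positivity)]
        nlinarith [mul_nonneg hP hQ]

theorem exists_rpow_lintegral_sq_setIntegral_sum_sq_le (ι : Type*) [Fintype ι] :
    ∃ K : ℝ, 0 < K ∧ ∀ {Ω : Set (ℝ × ℝ)}, Bornology.IsBounded Ω → ∀ {u : (ℝ × ℝ) × ℝ → ι → ℝ},
      ContDiff ℝ 1 u → (∀ p t, p ∉ Ω → u (p, t) = 0) → ∀ a b : ℝ,
      (∫⁻ p, ‖∫ t in Ioo a b, ∑ i, u (p, t) i ^ 2‖ₑ ^ (2 : ℝ)) ^ (1 / 4 : ℝ) ≤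
        ‖K * (∫ x in Ω ×ˢ Ioo a b, ∑ i, u x i ^ 2) ^ ((1 : ℝ) / 4) *
          (∫ x in Ω ×ˢ Ioo a b, gradSq u x) ^ ((1 : ℝ) / 4)‖ₑ := by
  obtain ⟨K, hK, hle⟩ := exists_lintegral_sq_setIntegral_sum_sq_le ι
  refine ⟨K ^ (1 / 4 : ℝ), by positivity, fun {Ω} hΩ {u} hu huΩ a b ↦ ?_⟩
  have hP : 0 ≤ ∫ x in Ω ×ˢ Ioo a b, ∑ i, u x i ^ 2 := integral_nonneg fun x ↦ by positivity
  have hQ : 0 ≤ ∫ x in Ω ×ˢ Ioo a b, gradSq u x := integral_nonneg (gradSq_nonneg u)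
  rw [mul_assoc, ← Real.mul_rpow hP hQ, ← Real.mul_rpow hK.le (by positivity),
    Real.enorm_rpow_of_nonneg (by positivity) (by norm_num)]
  exact ENNReal.rpow_le_rpow (hle hΩ hu huΩ a b) (by norm_num)

end Ladyzhenskaya

section Advection

variable {ι : Type*} [Fintype ι]

/-- The integrand `((u · ∇) v) · w` of the trilinear form of the Navier–Stokes equations. The fields
`v` and `w` may have any finite number of components. -/
noncomputable def advectionDot (u : (ℝ × ℝ) × ℝ → Fin 3 → ℝ) (v w : (ℝ × ℝ) × ℝ → ι → ℝ)
    (x : (ℝ × ℝ) × ℝ) : ℝ :=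
  ∑ i, (∑ j, u x j * fderiv ℝ v x (dir3 j) i) * w x i

theorem continuous_advectionDot {u : (ℝ × ℝ) × ℝ → Fin 3 → ℝ} {v w : (ℝ × ℝ) × ℝ → ι → ℝ}
    (hu : Continuous u) (hv : ContDiff ℝ 1 v) (hw : Continuous w) :
    Continuous (advectionDot u v w) :=
  continuous_finsetSum _ fun i _ ↦ (continuous_finsetSum _ fun j _ ↦
    ((continuous_apply j).comp hu).mul (continuous_fderiv_apply_apply hv (dir3 j) i)).mul
      ((continuous_apply i).comp hw)

theorem abs_advectionDot_le (u : (ℝ × ℝ) × ℝ → Fin 3 → ℝ) (v w : (ℝ × ℝ) × ℝ → ι → ℝ)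
    (x : (ℝ × ℝ) × ℝ) :
    |advectionDot u v w x| ≤
      √(gradSq v x) * (√(∑ j, u x j ^ 2) * √(∑ i, w x i ^ 2)) := by
  have hrows : ∑ i, (∑ j, u x j * fderiv ℝ v x (dir3 j) i) ^ 2 ≤
      (∑ j, u x j ^ 2) * gradSq v x :=
    calc _ ≤ ∑ i, (∑ j, u x j ^ 2) * ∑ j, fderiv ℝ v x (dir3 j) i ^ 2 := by
          gcongr
          exact Finset.sum_mul_sq_le_sq_mul_sq _ _ _
      _ = _ := (Finset.mul_sum ..).symm
  calc |advectionDot u v w x|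
      ≤ √(∑ i, (∑ j, u x j * fderiv ℝ v x (dir3 j) i) ^ 2) * √(∑ i, w x i ^ 2) :=
        abs_sum_mul_le_sqrt_mul_sqrt _ _ _
    _ ≤ √((∑ j, u x j ^ 2) * gradSq v x) * √(∑ i, w x i ^ 2) := by gcongr
    _ = _ := by
        rw [Real.sqrt_mul (by positivity)]
        ring

theorem lintegral_enorm_advectionDot_le {u : (ℝ × ℝ) × ℝ → Fin 3 → ℝ}
    {v w : (ℝ × ℝ) × ℝ → ι → ℝ} (hu : Continuous u) (hw : Continuous w) {p : ℝ × ℝ} {B : ℝ}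
    (hB : ∀ t, √(gradSq v (p, t)) ≤ B) (a b : ℝ) :
    ∫⁻ t in Ioo a b, ‖advectionDot u v w (p, t)‖ₑ ≤
      ‖B * (√(∫ t in Ioo a b, ∑ j, u (p, t) j ^ 2) * √(∫ t in Ioo a b, ∑ i, w (p, t) i ^ 2))‖ₑ := by
  have hint : ∀ {f : ℝ → ℝ}, Continuous f → IntegrableOn f (Ioo a b) := fun hf ↦
    hf.integrableOn_Icc.mono_set Ioo_subset_Icc_self
  calc _ ≤ ∫⁻ t in Ioo a b, ‖B‖ₑ * ‖√(∑ j, u (p, t) j ^ 2) * √(∑ i, w (p, t) i ^ 2)‖ₑ := by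
        refine lintegral_mono fun t ↦ ?_
        rw [← enorm_mul, enorm_le_iff_norm_le]
        exact (abs_advectionDot_le u v w (p, t)).trans
          ((mul_le_mul_of_nonneg_right (hB t) (by positivity)).trans (le_abs_self _))
    _ ≤ _ := by
        rw [lintegral_const_mul' _ _ enorm_ne_top, enorm_mul]
        gcongr
        exact lintegral_enorm_sqrt_mul_sqrt_le (hint (by fun_prop)) (hint (by fun_prop))
          (fun t ↦ by positivity) fun t ↦ by positivity

theorem exists_sqrt_gradSq_le (ι : Type*) [Fintype ι] {s : ℝ} (hs : 1 / 2 < s) :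
    ∃ K : ℝ, 0 < K ∧ ∀ (v : (ℝ × ℝ) × ℝ → ι → ℝ) (Dsv : (ℝ × ℝ) × ℝ → ι → Fin 3 → ℝ),
      ContDiff ℝ 1 v → Continuous Dsv → (∀ p t, v (p, t + 2 * π) = v (p, t)) →
      (∀ p i, ∫ t in Ioo (-π) π, v (p, t) i = 0) →
      (∀ p i j, IsFracDeriv s (fun t ↦ fderiv ℝ v (p, t) (dir3 j) i) fun t ↦ Dsv (p, t) i j) →
      ∀ p t, √(gradSq v (p, t)) ≤
        K * (∫ t in Ioo (-π) π, gradSq v (p, t)) ^ ((1 / 2 : ℝ) * (1 - 1 / (2 * s))) *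
          (∫ t in Ioo (-π) π, ∑ i, ∑ j, Dsv (p, t) i j ^ 2) ^ (1 / (4 * s)) := by
  obtain ⟨K, hK, hagmon⟩ := exists_sqrt_sum_sq_le_of_isFracDeriv (ι × Fin 3) hs
  refine ⟨K, hK, fun v Dsv hv hD hper hmean hfrac p t ↦ ?_⟩
  have hvper : ∀ t, fderiv ℝ v (p, t + 2 * π) = fderiv ℝ v (p, t) := fun t ↦ by
    have hshift : (fun x : (ℝ × ℝ) × ℝ ↦ v (x + (0, 2 * π))) = v := by
      funext ⟨q, t⟩
      rw [Prod.mk_add_mk, add_zero, hper]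
    simpa [hshift] using (fderiv_comp_add_right (𝕜 := ℝ) (f := v) (x := (p, t)) (0, 2 * π)).symm
  have hvmean : ∀ i j, ∫ t in Ioo (-π) π, fderiv ℝ v (p, t) (dir3 j) i = 0 := fun i j ↦ by
    have hends : ∀ q, v (q, -π) i = v (q, π) i := fun q ↦ by
      rw [← hper q (-π), show -π + 2 * π = π by ring]
    simpa only [fderiv_apply (hv.differentiable one_ne_zero _), ContinuousLinearMap.comp_apply,
      ContinuousLinearMap.proj_apply] using
      integral_fderiv_eq_zero_of_integral_eq_zero (contDiff_pi.1 hv i)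
        (by linarith [Real.pi_pos]) hends (fun q ↦ hmean q i) p (dir3 j)
  simpa only [gradSq, Fintype.sum_prod_type] using
    hagmon (fun k t ↦ fderiv ℝ v (p, t) (dir3 k.2) k.1) (fun k t ↦ Dsv (p, t) k.1 k.2)
      (fun k ↦ (continuous_fderiv_apply_apply hv _ _).comp (.prodMk_right p))
      (fun k ↦ by fun_prop) (fun k t ↦ by simp only [hvper]) (fun k ↦ hvmean k.1 k.2)
      (fun k ↦ hfrac p k.1 k.2) t

theorem exists_abs_setIntegral_advectionDot_le (ι : Type*) [Fintype ι] :
    ∃ L : ℝ, 0 < L ∧ ∀ {Ω : Set (ℝ × ℝ)}, Bornology.IsBounded Ω →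
      ∀ {u : (ℝ × ℝ) × ℝ → Fin 3 → ℝ} {v w : (ℝ × ℝ) × ℝ → ι → ℝ} {R : (ℝ × ℝ) × ℝ → ℝ},
        ContDiff ℝ 1 u → ContDiff ℝ 1 v → ContDiff ℝ 1 w → Continuous R → (∀ x, 0 ≤ R x) →
        (∀ p t, p ∉ Ω → u (p, t) = 0) → (∀ p t, p ∉ Ω → w (p, t) = 0) →
        ∀ {a b K α β : ℝ}, 0 ≤ K → 0 ≤ α → 0 ≤ β → α + β = 1 / 2 →
        (∀ p t, √(gradSq v (p, t)) ≤
          K * (∫ t in Ioo a b, gradSq v (p, t)) ^ α * (∫ t in Ioo a b, R (p, t)) ^ β) →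
        |∫ x in Ω ×ˢ Ioo a b, advectionDot u v w x| ≤
          L * K * (∫ x in Ω ×ˢ Ioo a b, ∑ i, u x i ^ 2) ^ ((1 : ℝ) / 4) *
            (∫ x in Ω ×ˢ Ioo a b, gradSq u x) ^ ((1 : ℝ) / 4) *
            (∫ x in Ω ×ˢ Ioo a b, gradSq v x) ^ α * (∫ x in Ω ×ˢ Ioo a b, R x) ^ β *
            (∫ x in Ω ×ˢ Ioo a b, ∑ i, w x i ^ 2) ^ ((1 : ℝ) / 4) *
            (∫ x in Ω ×ˢ Ioo a b, gradSq w x) ^ ((1 : ℝ) / 4) := by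
  obtain ⟨L, hL, hLu⟩ := exists_rpow_lintegral_sq_setIntegral_sum_sq_le (Fin 3)
  obtain ⟨M, hM, hMw⟩ := exists_rpow_lintegral_sq_setIntegral_sum_sq_le ι
  refine ⟨L * M, by positivity, fun {Ω} hΩ {u v w R} hu hv hw hR hR0 huΩ hwΩ {a b K α β} hK hα hβ
    hαβ hgrad ↦ ?_⟩
  have hu0 := hu.continuous
  have hw0 := hw.continuous
  have hholder := setLIntegral_enorm_prod_le_of_fiber_le volume hΩ hα hβ hαβ
    (continuous_advectionDot hu0 hv hw0) (continuous_gradSq hv) hR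
    (P := fun x ↦ ∑ i, u x i ^ 2) (R := fun x ↦ ∑ i, w x i ^ 2) (by fun_prop) (by fun_prop)
    (gradSq_nonneg v) hR0 (fun x ↦ by positivity) (fun x ↦ by positivity)
    fun p ↦ lintegral_enorm_advectionDot_le hu0 hw0 (hgrad p) a b
  have hbound := ((enorm_integral_le_lintegral_enorm _).trans hholder).trans <|
    mul_le_mul_right (mul_le_mul_right
      (mul_le_mul' (hLu hΩ hu huΩ a b) (hMw hΩ hw hwΩ a b)) _) _
  have hQu : 0 ≤ ∫ x in Ω ×ˢ Ioo a b, gradSq u x := integral_nonneg (gradSq_nonneg u)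
  have hQv : 0 ≤ ∫ x in Ω ×ˢ Ioo a b, gradSq v x := integral_nonneg (gradSq_nonneg v)
  have hQw : 0 ≤ ∫ x in Ω ×ˢ Ioo a b, gradSq w x := integral_nonneg (gradSq_nonneg w)
  have hI : 0 ≤ ∫ x in Ω ×ˢ Ioo a b, R x := integral_nonneg hR0
  rw [← Measure.volume_eq_prod, ← Real.enorm_rpow_of_nonneg hQv hα,
    ← Real.enorm_rpow_of_nonneg hI hβ, ← enorm_mul, ← enorm_mul, ← enorm_mul, ← enorm_mul,
    enorm_le_iff_norm_le, Real.norm_eq_abs, Real.norm_of_nonneg (by positivity)] at hbound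
  exact hbound.trans_eq (by ring)

end Advection

theorem statement5_general (ι : Type*) [Fintype ι] {s : ℝ} (hs : 1 / 2 < s) :
    ∃ C : ℝ, 0 < C ∧ ∀ Ω : Set (ℝ × ℝ), Bornology.IsBounded Ω →
      ∀ (u : (ℝ × ℝ) × ℝ → Fin 3 → ℝ) (v w : (ℝ × ℝ) × ℝ → ι → ℝ)
        (Dsv : (ℝ × ℝ) × ℝ → ι → Fin 3 → ℝ),
        ContDiff ℝ 1 u → ContDiff ℝ 1 v → ContDiff ℝ 1 w → Continuous Dsv →
        (∀ p t, v (p, t + 2 * π) = v (p, t)) →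
        (∀ p i, ∫ t in Ioo (-π) π, v (p, t) i = 0) →
        (∀ p t, p ∉ Ω → u (p, t) = 0) → (∀ p t, p ∉ Ω → w (p, t) = 0) →
        (∀ p i j, IsFracDeriv s (fun t ↦ fderiv ℝ v (p, t) (dir3 j) i) fun t ↦ Dsv (p, t) i j) →
        |∫ x in Ω ×ˢ Ioo (-π) π, advectionDot u v w x| ≤
          C * (∫ x in Ω ×ˢ Ioo (-π) π, ∑ i, u x i ^ 2) ^ ((1 : ℝ) / 4) *
            (∫ x in Ω ×ˢ Ioo (-π) π, gradSq u x) ^ ((1 : ℝ) / 4) *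
            (∫ x in Ω ×ˢ Ioo (-π) π, gradSq v x) ^ ((1 / 2 : ℝ) * (1 - 1 / (2 * s))) *
            (∫ x in Ω ×ˢ Ioo (-π) π, ∑ i, ∑ j, Dsv x i j ^ 2) ^ (1 / (4 * s)) *
            (∫ x in Ω ×ˢ Ioo (-π) π, ∑ i, w x i ^ 2) ^ ((1 : ℝ) / 4) *
            (∫ x in Ω ×ˢ Ioo (-π) π, gradSq w x) ^ ((1 : ℝ) / 4) := by
  obtain ⟨K, hK, hgrad⟩ := exists_sqrt_gradSq_le ι hs
  obtain ⟨L, hL, htri⟩ := exists_abs_setIntegral_advectionDot_le ι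
  obtain ⟨hα, hβ, hαβ⟩ := interpolation_exponents hs
  refine ⟨L * K, by positivity,
    fun Ω hΩ u v w Dsv hu hv hw hD hper hmean huΩ hwΩ hfrac ↦ ?_⟩
  exact htri hΩ hu hv hw (R := fun x ↦ ∑ i, ∑ j, Dsv x i j ^ 2) (by fun_prop)
    (fun x ↦ by positivity) huΩ hwΩ hK.le hα hβ hαβ (hgrad v Dsv hv hD hper hmean hfrac)

/-- For `s > 1/2` there is `C = C(s) > 0` such that for every
bounded open `Ω ⊆ ℝ²`, setting `D = Ω × (-π, π)`, all smooth divergence-free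
vector fields `u, v, w` that are `2π`-periodic with mean zero in `x₃` and vanish
on (outside of) the lateral boundary satisfy
`|∫_D (u·∇)v · w| ≤ C ‖u‖₂^{1/2} ‖∇u‖₂^{1/2} ‖∇v‖₂^{1-1/(2s)} ‖∂₃^s ∇v‖₂^{1/(2s)}
‖w‖₂^{1/2} ‖∇w‖₂^{1/2}`, where `∂₃^s ∇v` is characterized through the vertical
Fourier coefficients. -/
theorem statement5 (s : ℝ) (hs : 1 / 2 < s) :
    ∃ C : ℝ, 0 < C ∧
      ∀ (Ω : Set (ℝ × ℝ)), IsOpen Ω → Bornology.IsBounded Ω →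
      ∀ (u v w : (ℝ × ℝ) × ℝ → Fin 3 → ℝ) (Dsv : (ℝ × ℝ) × ℝ → Fin 3 → Fin 3 → ℝ),
        -- smoothness
        ContDiff ℝ (⊤ : ℕ∞) u → ContDiff ℝ (⊤ : ℕ∞) v → ContDiff ℝ (⊤ : ℕ∞) w → Continuous Dsv →
        -- divergence free
        (∀ x, ∑ j : Fin 3, fderiv ℝ u x (dir3 j) j = 0) →
        (∀ x, ∑ j : Fin 3, fderiv ℝ v x (dir3 j) j = 0) →
        (∀ x, ∑ j : Fin 3, fderiv ℝ w x (dir3 j) j = 0) →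
        -- 2π-periodicity in the vertical variable
        (∀ p t, u (p, t + 2 * π) = u (p, t)) →
        (∀ p t, v (p, t + 2 * π) = v (p, t)) →
        (∀ p t, w (p, t + 2 * π) = w (p, t)) →
        -- mean zero in the vertical variable
        (∀ (p : ℝ × ℝ) (i : Fin 3), ∫ t in Ioo (-π) π, u (p, t) i = 0) →
        (∀ (p : ℝ × ℝ) (i : Fin 3), ∫ t in Ioo (-π) π, v (p, t) i = 0) →
        (∀ (p : ℝ × ℝ) (i : Fin 3), ∫ t in Ioo (-π) π, w (p, t) i = 0) →
        -- vanishing on the lateral boundary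
        (∀ (p : ℝ × ℝ) t, p ∉ Ω → u (p, t) = 0) →
        (∀ (p : ℝ × ℝ) t, p ∉ Ω → v (p, t) = 0) →
        (∀ (p : ℝ × ℝ) t, p ∉ Ω → w (p, t) = 0) →
        -- `Dsv = ∂₃^s ∇v`: each vertical Fourier coefficient of `Dsv · i j`
        -- is `|k|^s` times the corresponding coefficient of `∂_j v_i`
        (∀ (p : ℝ × ℝ) (i j : Fin 3) (k : ℤ),
          (∫ t in Ioo (-π) π, (Dsv (p, t) i j : ℂ) * Complex.exp (-Complex.I * (k : ℂ) * (t : ℂ)))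
            = (|(k : ℝ)| ^ s : ℝ) *
              ∫ t in Ioo (-π) π,
                ((fderiv ℝ v (p, t) (dir3 j) i : ℝ) : ℂ) *
                  Complex.exp (-Complex.I * (k : ℂ) * (t : ℂ))) →
        |∫ x in Ω ×ˢ Ioo (-π) π,
            ∑ i : Fin 3, (∑ j : Fin 3, u x j * fderiv ℝ v x (dir3 j) i) * w x i| ≤
          C * (∫ x in Ω ×ˢ Ioo (-π) π, ∑ i : Fin 3, (u x i) ^ 2) ^ ((1 : ℝ) / 4) *
            (∫ x in Ω ×ˢ Ioo (-π) π,
                ∑ i : Fin 3, ∑ j : Fin 3, (fderiv ℝ u x (dir3 j) i) ^ 2) ^ ((1 : ℝ) / 4) *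
            (∫ x in Ω ×ˢ Ioo (-π) π,
                ∑ i : Fin 3, ∑ j : Fin 3, (fderiv ℝ v x (dir3 j) i) ^ 2) ^
              ((1 / 2 : ℝ) * (1 - 1 / (2 * s))) *
            (∫ x in Ω ×ˢ Ioo (-π) π,
                ∑ i : Fin 3, ∑ j : Fin 3, (Dsv x i j) ^ 2) ^ (1 / (4 * s)) *
            (∫ x in Ω ×ˢ Ioo (-π) π, ∑ i : Fin 3, (w x i) ^ 2) ^ ((1 : ℝ) / 4) *
            (∫ x in Ω ×ˢ Ioo (-π) π,
                ∑ i : Fin 3, ∑ j : Fin 3, (fderiv ℝ w x (dir3 j) i) ^ 2) ^ ((1 : ℝ) / 4) := by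
  obtain ⟨C, hC, hle⟩ := statement5_general (Fin 3) hs
  exact ⟨C, hC, fun Ω _ hΩ u v w Dsv hu hv hw hD _ _ _ _ hper _ _ hmean _ huΩ _ hwΩ hfrac ↦
    hle Ω hΩ u v w Dsv (hu.of_le (by simp)) (hv.of_le (by simp)) (hw.of_le (by simp)) hD hper
      hmean huΩ hwΩ hfrac⟩
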